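/- There are exactly 2208 Boolean functions f: F_2^5 → F_2 of algebraic degree exactly 2 with zero constant term in their ANF such that f is semi-bent and the function f*: F_2^n → F_2 given by the CA-based construction is semi-bent for every n with 5 ≤ n ≤ 20; exactly 280 of these functions additionally have the property that f* is balanced for every n with 5 ≤ n ≤ 20. -/

import Mathlib

/-- The CA-based construction: given a local rule `f` of `m` variables and `n ≥ m`,
the `n`-variable function `f*` is the XOR of all output cells of the no-boundary CA. -/
def caStar (m n : ℕ) (h : m ≤ n) (f : (Fin m → ZMod 2) → ZMod 2) :
    (Fin n → ZMod 2) → ZMod 2 :=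
  fun x => ∑ i : Fin (n - m + 1),
    f (fun j => x ⟨i.val + j.val, by have hi := i.isLt; have hj := j.isLt; omega⟩)

/-- The ANF coefficient `a_I` of a Boolean function, via the Möbius transform:
`a_I = ⊕_{x : supp(x) ⊆ I} f(x)`. -/
def anf {n : ℕ} (f : (Fin n → ZMod 2) → ZMod 2) (I : Finset (Fin n)) : ZMod 2 :=
  ∑ x ∈ Finset.univ.filter (fun x : Fin n → ZMod 2 => ∀ i, x i = 1 → i ∈ I), f x

/-- The algebraic degree of a Boolean function: `max {|I| : a_I ≠ 0}` (0 for the zero function). -/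
def algDegree {n : ℕ} (f : (Fin n → ZMod 2) → ZMod 2) : ℕ :=
  (Finset.univ.filter fun I : Finset (Fin n) => anf f I ≠ 0).sup Finset.card

/-- The Walsh transform `W_f(a) = Σ_x (-1)^(f(x) ⊕ a·x)`. -/
def walsh {n : ℕ} (f : (Fin n → ZMod 2) → ZMod 2) (a : Fin n → ZMod 2) : ℤ :=
  ∑ x : Fin n → ZMod 2, (-1 : ℤ) ^ (f x + ∑ i, a i * x i).val

/-- The semi-bent value `λ`: `2^((n+1)/2)` for odd `n`, `2^((n+2)/2)` for even `n`. -/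
def sbLambda (n : ℕ) : ℤ := if Odd n then 2 ^ ((n + 1) / 2) else 2 ^ ((n + 2) / 2)

/-- A Boolean function is semi-bent if its Walsh transform takes only the values `0, λ, -λ`. -/
def semiBent {n : ℕ} (f : (Fin n → ZMod 2) → ZMod 2) : Prop :=
  ∀ a, walsh f a = 0 ∨ walsh f a = sbLambda n ∨ walsh f a = -sbLambda n

/-- A Boolean function is balanced if it takes the value 1 exactly `2^(n-1)` times. -/
def balanced {n : ℕ} (f : (Fin n → ZMod 2) → ZMod 2) : Prop :=
  (Finset.univ.filter fun x => f x = 1).card = 2 ^ (n - 1)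

/-- `b` is a linear structure of `g` if the derivative `D_b g(x) = g(x) ⊕ g(x ⊕ b)` is constant. -/
def isLinearStructure {n : ℕ} (g : (Fin n → ZMod 2) → ZMod 2)
    (b : Fin n → ZMod 2) : Prop :=
  (∀ x, g x + g (x + b) = 0) ∨ (∀ x, g x + g (x + b) = 1)

/-!
A Boolean function of degree at most two without constant term is a quadratic form `Q` over `F₂`,
since `x_i = x_i²`. Squaring its Walsh sum gives `W_Q(a)² = 2^n · |R|` if `Q(x) + a·x` vanishes on
the radical `R` of the polar form of `Q`, and `0` otherwise. Hence `Q` is semi-bent iff `R` has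
dimension one (`n` odd) or two (`n` even), and balanced iff `Q` does not vanish on `R`.

The radical of `f*` is the kernel of the gradient map, which is banded: adding a window on the left
changes the gradient at the cells of that window only. So a basis of the radical is obtained by a
transfer procedure, sliding the window one cell at a time and keeping a basis of those partial
configurations whose gradient already vanishes at all cells left behind. These vectors are encoded
as natural numbers, with `^^^` as addition, and the procedure is evaluated for the `1023` possible
quadratic parts; the radical is independent of the linear part, which gives `2208 = 69 · 32`.
-/

/-- The nontrivial character `z ↦ (-1)^z` of `ZMod 2`, the summand of the Walsh transform. -/
def signChar : AddChar (ZMod 2) ℤ := AddChar.zmodChar 2 (ζ := -1) (by norm_num)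

lemma signChar_apply (z : ZMod 2) : signChar z = (-1) ^ z.val := rfl

lemma signChar_eq_one_iff {z : ZMod 2} : signChar z = 1 ↔ z = 0 := by
  revert z; decide

lemma sum_signChar_comp {A : Type*} [AddCommGroup A] [Fintype A] [DecidableEq (A →+ ZMod 2)]
    (φ : A →+ ZMod 2) :
    ∑ a, signChar (φ a) = if φ = 0 then (Fintype.card A : ℤ) else 0 := by
  classical
  have trivial_iff : signChar.compAddMonoidHom φ = 0 ↔ φ = 0 := by
    simp [DFunLike.ext_iff, signChar_eq_one_iff]
  simpa only [AddChar.compAddMonoidHom_apply, trivial_iff]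
    using AddChar.sum_eq_ite (signChar.compAddMonoidHom φ)

section GaussSum

variable {V : Type*} [AddCommGroup V] [Module (ZMod 2) V]

/-- The restriction of a quadratic form to the radical of its polar form, where it is additive. -/
def radicalHom (Q : QuadraticForm (ZMod 2) V) : LinearMap.ker Q.polarBilin →+ ZMod 2 :=
  AddMonoidHom.mk' (fun b => Q b) fun b c => by
    have polar_eq_zero : QuadraticMap.polar Q b c = 0 := LinearMap.congr_fun b.2 (c : V)
    simp [QuadraticMap.map_add Q, polar_eq_zero]

variable [Fintype V]

lemma sum_signChar_sq_eq_sum_mul (Q : QuadraticForm (ZMod 2) V) :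
    (∑ x, signChar (Q x)) ^ 2 = ∑ b, signChar (Q b) * ∑ x, signChar (Q.polarBilin b x) := by
  have shift (x b : V) :
      signChar (Q x) * signChar (Q (b + x)) = signChar (Q b) * signChar (Q.polarBilin b x) := by
    rw [← AddChar.map_add_eq_mul, ← AddChar.map_add_eq_mul, QuadraticMap.polarBilin_apply_apply,
      QuadraticMap.map_add Q]
    congr 1
    linear_combination CharTwo.add_self_eq_zero (Q x)
  calc (∑ x, signChar (Q x)) ^ 2
      = ∑ x, ∑ b, signChar (Q x) * signChar (Q (b + x)) := by
        rw [pow_two, Finset.sum_mul_sum]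
        exact Finset.sum_congr rfl fun x _ => (Equiv.sum_comp (Equiv.addRight x) _).symm
    _ = ∑ b, signChar (Q b) * ∑ x, signChar (Q.polarBilin b x) := by
        rw [Finset.sum_comm]
        simp only [shift, Finset.mul_sum]

open Classical in
lemma sum_signChar_sq (Q : QuadraticForm (ZMod 2) V) :
    (∑ x, signChar (Q x)) ^ 2 = if ∀ b ∈ LinearMap.ker Q.polarBilin, Q b = 0
      then (Fintype.card V * Nat.card (LinearMap.ker Q.polarBilin) : ℤ) else 0 := by
  have inner_sum (b : V) : ∑ x, signChar (Q.polarBilin b x) =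
      if b ∈ LinearMap.ker Q.polarBilin then (Fintype.card V : ℤ) else 0 := by
    have hom_eq_zero_iff :
        (Q.polarBilin b).toAddMonoidHom = 0 ↔ b ∈ LinearMap.ker Q.polarBilin := by
      simp [DFunLike.ext_iff]
    simpa only [hom_eq_zero_iff, LinearMap.toAddMonoidHom_coe]
      using sum_signChar_comp (Q.polarBilin b).toAddMonoidHom
  have radicalHom_eq_zero_iff : radicalHom Q = 0 ↔ ∀ b ∈ LinearMap.ker Q.polarBilin, Q b = 0 := by
    simp [DFunLike.ext_iff, radicalHom]
  calc (∑ x, signChar (Q x)) ^ 2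
      = (∑ b with b ∈ LinearMap.ker Q.polarBilin, signChar (Q b)) * Fintype.card V := by
        simp only [sum_signChar_sq_eq_sum_mul, inner_sum, mul_ite, mul_zero, ← Finset.sum_filter,
          Finset.sum_mul]
    _ = (∑ b, signChar (radicalHom Q b)) * Fintype.card V := by
        rw [Finset.sum_subtype _ (p := (· ∈ LinearMap.ker Q.polarBilin)) (by simp)]
        rfl
    _ = _ := by
        rw [sum_signChar_comp, Nat.card_eq_fintype_card]
        simp only [radicalHom_eq_zero_iff, ite_mul, zero_mul, mul_comm (Fintype.card V : ℤ)]

end GaussSum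

section Walsh

variable {n : ℕ}

/-- The linear functional `x ↦ a·x` as a quadratic form, using `z² = z` in `ZMod 2`. -/
def dotForm (a : Fin n → ZMod 2) : QuadraticForm (ZMod 2) (Fin n → ZMod 2) :=
  QuadraticMap.linMulLin (Fintype.linearCombination (ZMod 2) a)
    (Fintype.linearCombination (ZMod 2) a)

lemma dotForm_apply (a x : Fin n → ZMod 2) : dotForm a x = ∑ i, a i * x i := by
  have mul_self (z : ZMod 2) : z * z = z := by revert z; decide
  simp [dotForm, Fintype.linearCombination_apply, mul_self, mul_comm]

lemma polarBilin_add_dotForm (Q : QuadraticForm (ZMod 2) (Fin n → ZMod 2)) (a : Fin n → ZMod 2) :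
    (Q + dotForm a).polarBilin = Q.polarBilin := by
  ext i j
  simp only [LinearMap.comp_apply, QuadraticMap.polarBilin_apply_apply, QuadraticMap.polar,
    add_apply, dotForm_apply, Pi.add_apply, mul_add, Finset.sum_add_distrib]
  ring

open Classical in
lemma walsh_sq (Q : QuadraticForm (ZMod 2) (Fin n → ZMod 2)) (a : Fin n → ZMod 2) :
    walsh Q a ^ 2 = if ∀ b ∈ LinearMap.ker Q.polarBilin, Q b + ∑ i, a i * b i = 0
      then (2 ^ n * Nat.card (LinearMap.ker Q.polarBilin) : ℤ) else 0 := by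
  have walsh_eq : walsh Q a = ∑ x, signChar ((Q + dotForm a) x) := by
    simp only [walsh, signChar_apply, add_apply, dotForm_apply]
  rw [walsh_eq, sum_signChar_sq, polarBilin_add_dotForm]
  simp [dotForm_apply]

lemma sum_walsh (f : (Fin n → ZMod 2) → ZMod 2) : ∑ a, walsh f a = 2 ^ n * signChar (f 0) := by
  classical
  have inner_sum (x : Fin n → ZMod 2) :
      ∑ a : Fin n → ZMod 2, signChar (∑ i, a i * x i) = if x = 0 then 2 ^ n else 0 := by
    have hom_eq_zero_iff :
        (Fintype.linearCombination (ZMod 2) x).toAddMonoidHom = 0 ↔ x = 0 := by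
      refine ⟨fun h => funext fun i => ?_, fun h => by ext; simp [h]⟩
      simpa using DFunLike.congr_fun h (Pi.single i 1)
    have := sum_signChar_comp (Fintype.linearCombination (ZMod 2) x).toAddMonoidHom
    simpa [hom_eq_zero_iff, Fintype.linearCombination_apply] using this
  calc ∑ a, walsh f a = ∑ x, signChar (f x) * ∑ a : Fin n → ZMod 2, signChar (∑ i, a i * x i) := by
        simp only [walsh, ← signChar_apply, AddChar.map_add_eq_mul, Finset.mul_sum]
        exact Finset.sum_comm
    _ = 2 ^ n * signChar (f 0) := by simp [inner_sum, mul_comm ((2 : ℤ) ^ n)]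

lemma exists_walsh_ne_zero (f : (Fin n → ZMod 2) → ZMod 2) : ∃ a, walsh f a ≠ 0 := by
  by_contra! walsh_eq_zero
  have : (2 : ℤ) ^ n * signChar (f 0) = 0 := by
    rw [← sum_walsh, Finset.sum_eq_zero fun a _ => walsh_eq_zero a]
  simp [signChar_apply] at this

lemma sbLambda_sq (n : ℕ) : sbLambda n ^ 2 = 2 ^ n * 2 ^ (2 - n % 2) := by
  unfold sbLambda
  rcases Nat.even_or_odd' n with ⟨k, rfl | rfl⟩
  · rw [if_neg (by simp), ← pow_mul, ← pow_add]; congr 1; omega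
  · rw [if_pos (by simp), ← pow_mul, ← pow_add]; congr 1; omega

lemma semiBent_iff_walsh_sq {f : (Fin n → ZMod 2) → ZMod 2} :
    semiBent f ↔ ∀ a, walsh f a = 0 ∨ walsh f a ^ 2 = sbLambda n ^ 2 :=
  forall_congr' fun _ => or_congr_right sq_eq_sq_iff_eq_or_eq_neg.symm

theorem semiBent_iff_card_ker (Q : QuadraticForm (ZMod 2) (Fin n → ZMod 2)) :
    semiBent Q ↔ Nat.card (LinearMap.ker Q.polarBilin) = 2 ^ (2 - n % 2) := by
  classical
  have walsh_sq_of_ne_zero {a : Fin n → ZMod 2} (ha : walsh Q a ≠ 0) :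
      walsh Q a ^ 2 = 2 ^ n * Nat.card (LinearMap.ker Q.polarBilin) := by
    have := walsh_sq Q a
    split_ifs at this
    · exact this
    · exact absurd (pow_eq_zero_iff two_ne_zero |>.1 this) ha
  rw [semiBent_iff_walsh_sq, sbLambda_sq]
  constructor
  · intro semibent
    obtain ⟨a, ha⟩ := exists_walsh_ne_zero Q
    have := (walsh_sq_of_ne_zero ha).symm.trans ((semibent a).resolve_left ha)
    exact_mod_cast mul_left_cancel₀ (by positivity) this
  · intro card_eq a
    refine or_iff_not_imp_left.2 fun ha => ?_
    rw [walsh_sq_of_ne_zero ha, card_eq]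
    norm_cast

lemma sum_signChar_eq_zero_iff_balanced [NeZero n] {f : (Fin n → ZMod 2) → ZMod 2} :
    ∑ x, signChar (f x) = 0 ↔ balanced f := by
  have signChar_eq (z : ZMod 2) : signChar z = 1 - 2 * if z = 1 then 1 else 0 := by
    revert z; decide
  have two_pow : (2 : ℤ) ^ n = 2 * 2 ^ (n - 1) := by
    rw [← pow_succ', Nat.sub_add_cancel NeZero.one_le]
  simp only [signChar_eq, Finset.sum_sub_distrib, ← Finset.mul_sum, Finset.sum_boole, balanced]
  simp only [Finset.sum_const, Finset.card_univ, Fintype.card_pi, ZMod.card, Finset.prod_const,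
    Fintype.card_fin, nsmul_eq_mul, mul_one, Nat.cast_pow, Nat.cast_ofNat, two_pow]
  rw [← mul_sub, mul_eq_zero, or_iff_right two_ne_zero, sub_eq_zero, eq_comm]
  norm_cast

theorem balanced_iff_exists_mem_ker [NeZero n] (Q : QuadraticForm (ZMod 2) (Fin n → ZMod 2)) :
    balanced Q ↔ ∃ b ∈ LinearMap.ker Q.polarBilin, Q b ≠ 0 := by
  classical
  rw [← sum_signChar_eq_zero_iff_balanced, ← pow_eq_zero_iff two_ne_zero, sum_signChar_sq]
  split_ifs with vanishes
  · have card_mul_ne_zero :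
        (Fintype.card (Fin n → ZMod 2) * Nat.card (LinearMap.ker Q.polarBilin) : ℤ) ≠ 0 := by
      exact_mod_cast mul_ne_zero Fintype.card_ne_zero Nat.card_pos.ne'
    exact iff_of_false card_mul_ne_zero (by simpa using vanishes)
  · simpa using vanishes

end Walsh

section AlgebraicNormalForm

variable {n : ℕ}

lemma anf_eq_sum_powerset (f : (Fin n → ZMod 2) → ZMod 2) (I : Finset (Fin n)) :
    anf f I = ∑ S ∈ I.powerset, f fun i => if i ∈ S then 1 else 0 := by
  have ite_eq_self (z : ZMod 2) : (if z = 1 then 1 else 0) = z := by revert z; decide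
  refine Finset.sum_nbij' (fun x => Finset.univ.filter (x · = 1))
    (fun S i => if i ∈ S then 1 else 0)
    (fun x hx => ?_) (fun S hS => ?_) (fun x _ => ?_) (fun S _ => ?_) (fun x _ => ?_)
  · simpa [Finset.subset_iff] using hx
  · simpa [Finset.subset_iff] using hS
  · simp [ite_eq_self]
  · simp
  · simp [ite_eq_self]

lemma anf_monomial (I J : Finset (Fin n)) :
    anf (fun x => ∏ i ∈ I, x i) J = if I = J then 1 else 0 := by
  have count : anf (fun x => ∏ i ∈ I, x i) J = (Finset.Icc I J).card := by
    rw [anf_eq_sum_powerset, ← Finset.filter_subset_univ, Finset.sum_filter]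
    simp only [Finset.prod_ite_zero, Finset.prod_const_one, ← Finset.subset_iff]
    rw [← Finset.sum_filter, Finset.sum_boole, Finset.filter_filter]
    congr 2
    ext S
    simp [and_comm]
  rw [count]
  split_ifs with h
  · simp [h]
  · by_cases hIJ : I ⊆ J
    · have card_lt : I.card < J.card := Finset.card_lt_card (hIJ.ssubset_of_ne h)
      rw [Finset.card_Icc_finset hIJ, ZMod.natCast_eq_zero_iff]
      exact dvd_pow_self 2 (by omega)
    · rw [Finset.Icc_eq_empty (by simpa using hIJ), Finset.card_empty, Nat.cast_zero]

lemma anf_sum_monomials {ι : Type*} [Fintype ι] (s : ι → Finset (Fin n)) (c : ι → ZMod 2)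
    (I : Finset (Fin n)) :
    anf (fun x => ∑ t, c t * ∏ i ∈ s t, x i) I = ∑ t, if s t = I then c t else 0 := by
  calc anf (fun x => ∑ t, c t * ∏ i ∈ s t, x i) I
      = ∑ t, c t * anf (fun x => ∏ i ∈ s t, x i) I := by
        simp only [anf, Finset.mul_sum]
        exact Finset.sum_comm
    _ = ∑ t, if s t = I then c t else 0 := by simp [anf_monomial]

theorem anf_injective : Function.Injective (anf (n := n)) := by
  have leftInverse : Function.LeftInverse (anf (n := n)) fun c x => ∑ I, c I * ∏ i ∈ I, x i :=
    fun c => funext fun I => by simpa using anf_sum_monomials id c I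
  exact (leftInverse.rightInverse_of_card_le (by simp)).injective

lemma algDegree_le_iff {f : (Fin n → ZMod 2) → ZMod 2} {d : ℕ} :
    algDegree f ≤ d ↔ ∀ I, anf f I ≠ 0 → I.card ≤ d := by
  simp [algDegree]

end AlgebraicNormalForm

section MonomialForms

variable {n : ℕ} {ι : Type*} [Fintype ι]

/-- The Boolean function `x ↦ x_i * x_j` for `p = (i, j)`. -/
def pairMonomial (p : Fin n × Fin n) (x : Fin n → ZMod 2) : ZMod 2 := x p.1 * x p.2

/-- The quadratic form `∑ t, c t * x_(p t).1 * x_(p t).2`. A diagonal pair `(i, i)` contributes the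
linear term `x_i = x_i²`, so these are all Boolean functions of degree at most two without
constant term. -/
def pairForm (p : ι → Fin n × Fin n) (c : ι → ZMod 2) :
    QuadraticForm (ZMod 2) (Fin n → ZMod 2) :=
  ∑ t, c t • QuadraticMap.linMulLin (LinearMap.proj (p t).1) (LinearMap.proj (p t).2)

lemma pairForm_apply (p : ι → Fin n × Fin n) (c : ι → ZMod 2) (x : Fin n → ZMod 2) :
    pairForm p c x = ∑ t, c t * pairMonomial (p t) x := by
  simp [pairForm, pairMonomial]

lemma polar_pairForm (p : ι → Fin n × Fin n) (c : ι → ZMod 2) (x y : Fin n → ZMod 2) :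
    QuadraticMap.polar (pairForm p c) x y =
      ∑ t, c t * QuadraticMap.polar (pairMonomial (p t)) x y := by
  simp only [QuadraticMap.polar, pairForm_apply, mul_sub, Finset.sum_sub_distrib]

lemma polar_pairMonomial_diag (i : Fin n) (x y : Fin n → ZMod 2) :
    QuadraticMap.polar (pairMonomial (i, i)) x y = 0 := by
  simp only [QuadraticMap.polar, pairMonomial, Pi.add_apply]
  linear_combination CharTwo.add_self_eq_zero (x i * y i)

lemma pairForm_sumElim {κ : Type*} [Fintype κ] (p : ι → Fin n × Fin n) (p' : κ → Fin n × Fin n)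
    (c : ι → ZMod 2) (d : κ → ZMod 2) :
    pairForm (Sum.elim p p') (Sum.elim c d) = pairForm p c + pairForm p' d := by
  simp [pairForm]

/-- The set of variables occurring in the monomial `x_i * x_j`. -/
def pairSupport (p : Fin n × Fin n) : Finset (Fin n) := {p.1, p.2}

lemma prod_pairSupport (p : Fin n × Fin n) (x : Fin n → ZMod 2) :
    ∏ i ∈ pairSupport p, x i = pairMonomial p x := by
  have mul_self (z : ZMod 2) : z = z * z := by revert z; decide
  rcases eq_or_ne p.1 p.2 with h | h
  · simpa [pairSupport, pairMonomial, h] using mul_self _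
  · exact Finset.prod_pair h

lemma anf_pairForm (p : ι → Fin n × Fin n) (c : ι → ZMod 2) (I : Finset (Fin n)) :
    anf (pairForm p c) I = ∑ t, if pairSupport (p t) = I then c t else 0 := by
  rw [← anf_sum_monomials]
  congr 1
  ext x
  simp [pairForm_apply, prod_pairSupport]

variable {p : ι → Fin n × Fin n}

lemma anf_pairForm_pairSupport (hp : Function.Injective (pairSupport ∘ p)) (c : ι → ZMod 2)
    (t : ι) : anf (pairForm p c) (pairSupport (p t)) = c t := by
  classical
  have support_eq_iff (s : ι) : pairSupport (p s) = pairSupport (p t) ↔ s = t := hp.eq_iff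
  simp [anf_pairForm, support_eq_iff]

lemma anf_pairForm_eq_zero (c : ι → ZMod 2) {I : Finset (Fin n)}
    (hI : ∀ t, pairSupport (p t) ≠ I) : anf (pairForm p c) I = 0 := by
  simp [anf_pairForm, hI]

lemma eq_pairForm_of_anf_eq_zero (hp : Function.Injective (pairSupport ∘ p))
    {f : (Fin n → ZMod 2) → ZMod 2} (hf : ∀ I, (∀ t, pairSupport (p t) ≠ I) → anf f I = 0) :
    f = pairForm p fun t => anf f (pairSupport (p t)) := by
  refine anf_injective (funext fun I => ?_)
  by_cases hI : ∃ t, pairSupport (p t) = I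
  · obtain ⟨t, rfl⟩ := hI
    rw [anf_pairForm_pairSupport hp]
  · push Not at hI
    rw [hf I hI, anf_pairForm_eq_zero _ hI]

end MonomialForms

section BitCodes

/-- The binary digit of weight `2^i` of `c`, as an element of `ZMod 2`. -/
def bitAt (c i : ℕ) : ZMod 2 := (c.testBit i).toNat

/-- The vector of the first `n` binary digits of `c`; on codes below `2^n` this is a bijection onto
`Fin n → ZMod 2`, turning `^^^` into `+`. -/
def bits (n c : ℕ) : Fin n → ZMod 2 := fun i => bitAt c i

lemma bitAt_eq_bitAt_iff {a b i j : ℕ} : bitAt a i = bitAt b j ↔ a.testBit i = b.testBit j := by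
  unfold bitAt
  generalize a.testBit i = s
  generalize b.testBit j = t
  revert s t
  decide

lemma natCast_toNat_decide (z : ZMod 2) : ((decide (z = 1)).toNat : ZMod 2) = z := by
  revert z; decide

lemma natCast_toNat_xor (s t : Bool) : ((s ^^ t).toNat : ZMod 2) = s.toNat + t.toNat := by
  revert s t
  decide

lemma bitAt_xor (a b i : ℕ) : bitAt (a ^^^ b) i = bitAt a i + bitAt b i := by
  rw [bitAt, Nat.testBit_xor]
  exact natCast_toNat_xor ..

lemma bitAt_zero_left (i : ℕ) : bitAt 0 i = 0 := by simp [bitAt]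

lemma bits_xor (n a b : ℕ) : bits n (a ^^^ b) = bits n a + bits n b :=
  funext fun _ => bitAt_xor ..

lemma bitAt_eq_zero_of_lt {n c i : ℕ} (hc : c < 2 ^ n) (hi : n ≤ i) : bitAt c i = 0 := by
  simp [bitAt, Nat.testBit_lt_two_pow (hc.trans_le (Nat.pow_le_pow_right two_pos hi))]

lemma bits_injOn (n : ℕ) : Set.InjOn (bits n) (Set.Iio (2 ^ n)) := by
  intro a ha b hb hab
  refine Nat.eq_of_testBit_eq fun i => bitAt_eq_bitAt_iff.1 ?_
  rcases lt_or_ge i n with hi | hi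
  · exact congrFun hab ⟨i, hi⟩
  · rw [bitAt_eq_zero_of_lt ha hi, bitAt_eq_zero_of_lt hb hi]

lemma bits_surjOn (n : ℕ) : Set.SurjOn (bits n) (Set.Iio (2 ^ n)) Set.univ := by
  intro v _
  refine ⟨Nat.ofBits fun i => decide (v i = 1), Nat.ofBits_lt_two_pow _, funext fun i => ?_⟩
  simp [bits, bitAt, natCast_toNat_decide]

lemma bits_mod_two_pow (n c : ℕ) : bits n (c % 2 ^ n) = bits n c :=
  funext fun i => bitAt_eq_bitAt_iff.2 (by simp)

lemma bitAt_shiftRight (c k i : ℕ) : bitAt (c >>> k) i = bitAt c (k + i) :=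
  bitAt_eq_bitAt_iff.2 (Nat.testBit_shiftRight c)

lemma bitAt_shiftLeft (c k i : ℕ) :
    bitAt (c <<< k) i = if k ≤ i then bitAt c (i - k) else 0 := by
  split_ifs with h <;> simp [bitAt, Nat.testBit_shiftLeft, h]

end BitCodes

section XorSpan

/-- All sums of sublists of a list of bit codes: the linear span, with multiplicities. -/
def xorSpan : List ℕ → List ℕ
  | [] => [0]
  | p :: L => xorSpan L ++ (xorSpan L).map (p ^^^ ·)

lemma length_xorSpan (L : List ℕ) : (xorSpan L).length = 2 ^ L.length := by
  induction L with
  | nil => rfl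
  | cons p L ih => simp [xorSpan, ih, pow_succ, mul_two]

lemma xorSpan_map {φ : ℕ → ℕ} (hφ : ∀ a b, φ (a ^^^ b) = φ a ^^^ φ b) (L : List ℕ) :
    xorSpan (L.map φ) = (xorSpan L).map φ := by
  have map_zero : φ 0 = 0 := by simpa using hφ 0 0
  induction L with
  | nil => simp [xorSpan, map_zero]
  | cons p L ih => simp [xorSpan, ih, hφ]

lemma two_pow_xor_of_lt {k x : ℕ} (hx : x < 2 ^ k) : 2 ^ k ^^^ x = 2 ^ k + x := by
  have := Nat.div_add_mod (2 ^ k ^^^ x) (2 ^ k)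
  rw [Nat.xor_div_two_pow, Nat.xor_mod_two_pow, Nat.div_self (Nat.two_pow_pos k), Nat.mod_self,
    Nat.div_eq_of_lt hx, Nat.mod_eq_of_lt hx] at this
  simpa using this.symm

lemma xorSpan_two_pow (k : ℕ) :
    xorSpan ((List.range k).reverse.map (2 ^ ·)) = List.range (2 ^ k) := by
  induction k with
  | zero => rfl
  | succ k ih =>
    rw [List.range_succ, List.reverse_append, List.reverse_singleton, List.singleton_append,
      List.map_cons, xorSpan, ih, pow_succ, mul_two, List.range_add]
    congr 1
    exact List.map_congr_left fun x hx => two_pow_xor_of_lt (List.mem_range.1 hx)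

/-- Adds the pivot `p` to the codes having digit `i`. -/
def clearBit (i p x : ℕ) : ℕ := bif x.testBit i then x ^^^ p else x

lemma clearBit_xor (i p a b : ℕ) :
    clearBit i p (a ^^^ b) = clearBit i p a ^^^ clearBit i p b := by
  unfold clearBit
  cases ha : a.testBit i <;> cases hb : b.testBit i <;>
    simp [ha, hb, Nat.xor_assoc, Nat.xor_left_comm p, Nat.xor_comm p]

lemma map_clearBit (i p : ℕ) (S : Multiset ℕ) :
    S.map (clearBit i p) = S.filter (fun z => z.testBit i = false) +
      (S.filter fun z => z.testBit i = true).map (p ^^^ ·) := by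
  induction S using Multiset.induction with
  | empty => rfl
  | cons z S ih => cases hz : z.testBit i <;> simp [clearBit, hz, ih, Nat.xor_comm p]

/-- A list whose span consists of the elements of the span of `L` with digit `i` equal to zero: one
step of Gaussian elimination, with the first list element having digit `i` as pivot. -/
def cutBit (i : ℕ) : List ℕ → List ℕ
  | [] => []
  | p :: L => bif p.testBit i then L.map (clearBit i p) else p :: cutBit i L

theorem xorSpan_cutBit (i : ℕ) (L : List ℕ) :
    (xorSpan (cutBit i L) : Multiset ℕ) =
      (xorSpan L : Multiset ℕ).filter fun z => z.testBit i = false := by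
  induction L with
  | nil => simp [cutBit, xorSpan, Multiset.filter_singleton]
  | cons p L ih =>
    rw [xorSpan, ← Multiset.coe_add, ← Multiset.map_coe, Multiset.filter_add, Multiset.filter_map]
    cases hp : p.testBit i with
    | false =>
      rw [cutBit, hp, cond_false, xorSpan, ← Multiset.coe_add, ← Multiset.map_coe, ih]
      simp [hp]
    | true =>
      rw [cutBit, hp, cond_true, xorSpan_map (clearBit_xor i p), ← Multiset.map_coe, map_clearBit]
      simp [hp]

lemma xorSpan_foldl_cutBit (k : ℕ) (L : List ℕ) :
    (xorSpan ((List.range k).foldl (fun M i => cutBit i M) L) : Multiset ℕ) =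
      (xorSpan L : Multiset ℕ).filter fun z => ∀ i < k, z.testBit i = false := by
  induction k with
  | zero => simp
  | succ k ih =>
    rw [List.range_succ, List.foldl_concat, xorSpan_cutBit, ih, Multiset.filter_filter]
    exact Multiset.filter_congr fun z _ => by
      rw [Nat.forall_lt_succ_right, and_comm]

end XorSpan

section KernelBasis

variable {r : ℕ} {K : ℕ → ℕ}

/-- `K` acts on `m`-digit codes as an `F₂`-linear map. -/
structure IsXorLinear (m : ℕ) (K : ℕ → ℕ) : Prop where
  lt : ∀ w < 2 ^ m, K w < 2 ^ m
  map_xor : ∀ u < 2 ^ m, ∀ v < 2 ^ m, K (u ^^^ v) = K u ^^^ K v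

/-- The gradient of the XOR of `N` consecutive windows of `r + 1` cells, as a bit code, where `K`
gives the gradient of a single window. -/
def gradCode (r : ℕ) (K : ℕ → ℕ) : ℕ → ℕ → ℕ
  | 0, _ => 0
  | N + 1, x => gradCode r K N (x >>> 1) <<< 1 ^^^ K (x % 2 ^ (r + 1))

/-- A configuration `x` together with the gradient of its `N` windows in the low digits. -/
def tagged (r : ℕ) (K : ℕ → ℕ) (N x : ℕ) : ℕ := x <<< (r + 1) ^^^ gradCode r K N x

/-- The tagged configurations of `N + r` cells whose gradient vanishes at all cells but the first
`r`. Only these can be extended to the left to a configuration with zero gradient, because a new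
window affects the first `r + 1` cells only. -/
def extendable (r : ℕ) (K : ℕ → ℕ) (N : ℕ) : Multiset ℕ :=
  ((Multiset.range (2 ^ (N + r))).filter fun x => gradCode r K N x < 2 ^ r).map (tagged r K N)

/-- Prepends a zero cell to a tagged configuration. -/
def prependZero (r : ℕ) (K : ℕ → ℕ) (z : ℕ) : ℕ := z <<< 1 ^^^ K ((z >>> r) % 2 ^ (r + 1))

/-- A basis of `extendable r K N`. The new head `2 ^ (r + 1) ^^^ K 1` is the tagged configuration
whose first cell only is one, so that its span with the old basis also accounts for prepending a
one. -/
def extendableBasis (r : ℕ) (K : ℕ → ℕ) : ℕ → List ℕ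
  | 0 => ((List.range r).reverse.map (2 ^ ·)).map (· <<< (r + 1))
  | N + 1 => cutBit r ((2 ^ (r + 1) ^^^ K 1) :: (extendableBasis r K N).map (prependZero r K))

/-- A basis of the configurations with zero gradient. -/
def kernelBasis (r : ℕ) (K : ℕ → ℕ) (N : ℕ) : List ℕ :=
  (List.range r).foldl (fun L i => cutBit i L) (extendableBasis r K N)

lemma lt_two_pow_iff_testBit {k a : ℕ} :
    a < 2 ^ k ↔ a < 2 ^ (k + 1) ∧ a.testBit k = false := by
  refine ⟨fun h => ⟨by rw [pow_succ]; omega, Nat.testBit_lt_two_pow h⟩, fun ⟨h, hk⟩ => ?_⟩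
  refine Nat.lt_pow_two_of_testBit a fun i hi => ?_
  rcases hi.eq_or_lt with rfl | hi
  · exact hk
  · exact Nat.testBit_lt_two_pow (h.trans_le (Nat.pow_le_pow_right two_pos hi))

lemma shiftLeft_one_xor_lt_iff {k a b : ℕ} (hb : b < 2 ^ (k + 1)) :
    a <<< 1 ^^^ b < 2 ^ (k + 1) ↔ a < 2 ^ k := by
  have shiftRight_eq : (a <<< 1 ^^^ b) >>> (k + 1) = a >>> k := by
    rw [Nat.shiftRight_xor_distrib, Nat.shiftRight_eq_zero b (k + 1) hb, Nat.xor_zero, Nat.add_comm,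
      Nat.shiftRight_add, Nat.shiftLeft_shiftRight]
  rw [Nat.shiftRight_eq_div_pow, Nat.shiftRight_eq_div_pow] at shiftRight_eq
  rw [← Nat.div_eq_zero_iff_lt (Nat.two_pow_pos _), shiftRight_eq,
    Nat.div_eq_zero_iff_lt (Nat.two_pow_pos _)]

lemma testBit_tagged {N x i : ℕ} (hi : i ≤ r) :
    (tagged r K N x).testBit i = (gradCode r K N x).testBit i := by
  simp [tagged, Nat.testBit_shiftLeft, show ¬ r + 1 ≤ i by omega]

lemma gradCode_succ_lt_iff (hK : IsXorLinear (r + 1) K) (N x : ℕ) :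
    gradCode r K (N + 1) x < 2 ^ r ↔
      gradCode r K N (x >>> 1) < 2 ^ r ∧ (tagged r K (N + 1) x).testBit r = false := by
  rw [lt_two_pow_iff_testBit, testBit_tagged le_rfl, gradCode,
    shiftLeft_one_xor_lt_iff (hK.lt _ (Nat.mod_lt _ (Nat.two_pow_pos _)))]

lemma prependZero_tagged {N x : ℕ} (hx : gradCode r K N x < 2 ^ r) :
    prependZero r K (tagged r K N x) = tagged r K (N + 1) (x <<< 1) := by
  have cells : tagged r K N x >>> r = x <<< 1 := by
    rw [tagged, Nat.shiftRight_xor_distrib, Nat.shiftRight_eq_zero _ r hx, Nat.xor_zero,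
      Nat.add_comm, Nat.shiftLeft_add, Nat.shiftLeft_shiftRight]
  rw [prependZero, cells, tagged, tagged, gradCode, Nat.shiftLeft_xor_distrib,
    Nat.shiftLeft_shiftRight, Nat.xor_assoc, ← Nat.shiftLeft_add, ← Nat.shiftLeft_add, Nat.add_comm]

lemma shiftLeft_one_xor_one_shiftRight (x : ℕ) : (x <<< 1 ^^^ 1) >>> 1 = x := by
  rw [Nat.shiftRight_xor_distrib, Nat.shiftLeft_shiftRight, show 1 >>> 1 = 0 from rfl, Nat.xor_zero]

lemma multiset_range_two_mul (k : ℕ) :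
    Multiset.range (2 * k) = (Multiset.range k).map (· <<< 1) +
      (Multiset.range k).map (· <<< 1 ^^^ 1) := by
  induction k with
  | zero => rfl
  | succ k ih =>
    have odd : k <<< 1 ^^^ 1 = 2 * k + 1 := by simp [Nat.shiftLeft_eq, mul_comm]
    have even : k <<< 1 = 2 * k := by rw [Nat.shiftLeft_eq, pow_one, mul_comm]
    rw [mul_add_one, Multiset.range_succ, Multiset.range_succ, Multiset.range_succ, ih,
      Multiset.map_cons, Multiset.map_cons, odd, even, Multiset.cons_add, Multiset.add_cons,
      Multiset.cons_swap]

lemma tagged_xor_one (hK : IsXorLinear (r + 1) K) {N x : ℕ} :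
    tagged r K (N + 1) (x <<< 1 ^^^ 1) =
      2 ^ (r + 1) ^^^ K 1 ^^^ tagged r K (N + 1) (x <<< 1) := by
  have one_lt : 1 < 2 ^ (r + 1) := Nat.one_lt_two_pow (by omega)
  have local_grad : K ((x <<< 1 ^^^ 1) % 2 ^ (r + 1)) = K (x <<< 1 % 2 ^ (r + 1)) ^^^ K 1 := by
    rw [Nat.xor_mod_two_pow, Nat.mod_eq_of_lt one_lt,
      hK.map_xor _ (Nat.mod_lt _ (Nat.two_pow_pos _)) _ one_lt]
  rw [tagged, tagged, gradCode, gradCode, local_grad, shiftLeft_one_xor_one_shiftRight,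
    Nat.shiftLeft_shiftRight, Nat.shiftLeft_xor_distrib, Nat.one_shiftLeft]
  ac_rfl

lemma prependZero_xor (hK : IsXorLinear (r + 1) K) (a b : ℕ) :
    prependZero r K (a ^^^ b) = prependZero r K a ^^^ prependZero r K b := by
  have mod_lt (c : ℕ) : c % 2 ^ (r + 1) < 2 ^ (r + 1) := Nat.mod_lt _ (Nat.two_pow_pos _)
  rw [prependZero, Nat.shiftRight_xor_distrib, Nat.xor_mod_two_pow,
    hK.map_xor _ (mod_lt _) _ (mod_lt _), Nat.shiftLeft_xor_distrib, prependZero, prependZero]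
  ac_rfl

theorem extendable_succ (hK : IsXorLinear (r + 1) K) (N : ℕ) :
    extendable r K (N + 1) =
      ((extendable r K N).map (prependZero r K) + (extendable r K N).map
        fun z => 2 ^ (r + 1) ^^^ K 1 ^^^ prependZero r K z).filter
          fun z => z.testBit r = false := by
  have prepend_zero : (extendable r K N).map (prependZero r K) =
      ((Multiset.range (2 ^ (N + r))).filter fun x => gradCode r K N x < 2 ^ r).map
        fun x => tagged r K (N + 1) (x <<< 1) := by
    rw [extendable, Multiset.map_map]
    exact Multiset.map_congr rfl fun x hx => prependZero_tagged (Multiset.mem_filter.1 hx).2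
  have prepend_one : (extendable r K N).map
        (fun z => 2 ^ (r + 1) ^^^ K 1 ^^^ prependZero r K z) =
      ((Multiset.range (2 ^ (N + r))).filter fun x => gradCode r K N x < 2 ^ r).map
        fun x => tagged r K (N + 1) (x <<< 1 ^^^ 1) := by
    simp only [tagged_xor_one hK]
    simpa only [Multiset.map_map, Function.comp_def] using
      congrArg (Multiset.map (2 ^ (r + 1) ^^^ K 1 ^^^ ·)) prepend_zero
  rw [prepend_zero, prepend_one, extendable, Nat.add_right_comm, pow_succ, mul_comm,
    multiset_range_two_mul]
  simp only [Multiset.filter_add, Multiset.map_add, Multiset.filter_map, Multiset.map_map,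
    Multiset.filter_filter, Function.comp_def, gradCode_succ_lt_iff hK,
    shiftLeft_one_xor_one_shiftRight, Nat.shiftLeft_shiftRight, and_comm]

theorem xorSpan_extendableBasis (hK : IsXorLinear (r + 1) K) (N : ℕ) :
    (xorSpan (extendableBasis r K N) : Multiset ℕ) = extendable r K N := by
  induction N with
  | zero =>
    have tagged_zero : tagged r K 0 = (· <<< (r + 1)) := by
      ext x; simp [tagged, gradCode]
    rw [extendableBasis, xorSpan_map fun _ _ => Nat.shiftLeft_xor_distrib, xorSpan_two_pow]
    simp [extendable, tagged_zero, gradCode, Multiset.range]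
  | succ N ih =>
    rw [extendable_succ hK, ← ih, extendableBasis, xorSpan_cutBit, xorSpan,
      xorSpan_map (prependZero_xor hK)]
    simp [Function.comp_def]

theorem xorSpan_kernelBasis (hK : IsXorLinear (r + 1) K) (N : ℕ) :
    (xorSpan (kernelBasis r K N) : Multiset ℕ) =
      ((Multiset.range (2 ^ (N + r))).filter fun x => gradCode r K N x = 0).map
        (· <<< (r + 1)) := by
  rw [kernelBasis, xorSpan_foldl_cutBit, xorSpan_extendableBasis hK, extendable,
    Multiset.filter_map, Multiset.filter_filter]
  have grad_eq_zero_iff (x : ℕ) :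
      ((∀ i < r, (tagged r K N x).testBit i = false) ∧ gradCode r K N x < 2 ^ r) ↔
        gradCode r K N x = 0 := by
    refine ⟨fun ⟨low, lt⟩ => Nat.eq_of_testBit_eq fun i => ?_, fun h => ?_⟩
    · rcases lt_or_ge i r with hi | hi
      · rw [← testBit_tagged hi.le, low i hi, Nat.zero_testBit]
      · rw [Nat.testBit_lt_two_pow (lt.trans_le (Nat.pow_le_pow_right two_pos hi)),
          Nat.zero_testBit]
    · exact ⟨fun i hi => by rw [testBit_tagged hi.le, h, Nat.zero_testBit],
        h ▸ Nat.two_pow_pos r⟩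
  simp only [Function.comp_apply, grad_eq_zero_iff]
  exact Multiset.map_congr rfl fun x hx => by
    rw [tagged, (Multiset.mem_filter.1 hx).2, Nat.xor_zero]

end KernelBasis

section StarForm

variable {m n : ℕ}

/-- The positions of the cells of the `i`-th window of `m` cells. -/
def window (h : m ≤ n) (i : Fin (n - m + 1)) (j : Fin m) : Fin n := ⟨i + j, by omega⟩

/-- The CA-based construction applied to a quadratic form, as a quadratic form. -/
def starForm (h : m ≤ n) (Q : QuadraticForm (ZMod 2) (Fin m → ZMod 2)) :
    QuadraticForm (ZMod 2) (Fin n → ZMod 2) :=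
  ∑ i, Q.comp (LinearMap.funLeft (ZMod 2) (ZMod 2) (window h i))

lemma coe_starForm (h : m ≤ n) (Q : QuadraticForm (ZMod 2) (Fin m → ZMod 2)) :
    ⇑(starForm h Q) = caStar m n h Q := by
  ext x
  simp only [starForm, sum_apply, QuadraticMap.comp_apply]
  rfl

lemma polar_starForm (h : m ≤ n) (Q : QuadraticForm (ZMod 2) (Fin m → ZMod 2))
    (x y : Fin n → ZMod 2) : QuadraticMap.polar (starForm h Q) x y =
      ∑ i, QuadraticMap.polar Q (x ∘ window h i) (y ∘ window h i) := by
  simp only [QuadraticMap.polar, ← Finset.sum_sub_distrib, starForm, sum_apply]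
  rfl

lemma caStar_self (f : (Fin m → ZMod 2) → ZMod 2) : caStar m m le_rfl f = f := by
  ext x
  have : Subsingleton (Fin (m - m + 1)) := Fin.subsingleton_iff_le_one.2 (by omega)
  rw [caStar, Fintype.sum_subsingleton _ ⟨0, by omega⟩]
  simp

lemma bits_comp_window (h : m ≤ n) (i : Fin (n - m + 1)) (x : ℕ) :
    bits n x ∘ window h i = bits m ((x >>> (i : ℕ)) % 2 ^ m) := by
  rw [bits_mod_two_pow]
  exact funext fun j => (bitAt_shiftRight x i j).symm

/-- `K` computes the gradient of `Q` on bit codes: the digits of `K w` are the values of the polar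
form of `Q` at the point with code `w` and the unit vectors. -/
structure IsGradient (Q : QuadraticForm (ZMod 2) (Fin m → ZMod 2)) (K : ℕ → ℕ) : Prop where
  lt : ∀ w < 2 ^ m, K w < 2 ^ m
  bits_eq : ∀ w < 2 ^ m, ∀ j,
    bits m (K w) j = QuadraticMap.polar Q (bits m w) (Pi.single j 1)

variable {Q : QuadraticForm (ZMod 2) (Fin m → ZMod 2)} {K : ℕ → ℕ}

lemma IsGradient.isXorLinear (hK : IsGradient Q K) : IsXorLinear m K where
  lt := hK.lt
  map_xor u hu v hv := by
    refine bits_injOn m (hK.lt _ (Nat.xor_lt_two_pow hu hv))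
      (Nat.xor_lt_two_pow (hK.lt u hu) (hK.lt v hv)) (funext fun j => ?_)
    rw [bits_xor, Pi.add_apply, hK.bits_eq _ (Nat.xor_lt_two_pow hu hv), hK.bits_eq u hu,
      hK.bits_eq v hv, bits_xor, QuadraticMap.polar_add_left]

lemma IsGradient.add_of_polar_eq_zero (hK : IsGradient Q K)
    {L : QuadraticForm (ZMod 2) (Fin m → ZMod 2)} (hL : ∀ x y, QuadraticMap.polar L x y = 0) :
    IsGradient (Q + L) K where
  lt := hK.lt
  bits_eq w hw j := by
    rw [hK.bits_eq w hw, FunLike.coe_add, QuadraticMap.polar_add, hL, add_zero]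

lemma single_comp_window (h : m ≤ n) (i : Fin (n - m + 1)) (k : Fin n) :
    (Pi.single k 1 : Fin n → ZMod 2) ∘ window h i =
      if hk : (i : ℕ) ≤ k ∧ (k : ℕ) - i < m then Pi.single ⟨k - i, hk.2⟩ 1 else 0 := by
  ext j
  split_ifs with hk
  · simp only [Function.comp_apply, Pi.single_apply, window, Fin.ext_iff]
    congr 1
    simp; omega
  · simp only [Function.comp_apply, Pi.single_apply, window, Fin.ext_iff]
    rw [if_neg (by omega), Pi.zero_apply]

lemma IsGradient.polar_single_comp_window (hK : IsGradient Q K) (h : m ≤ n)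
    (i : Fin (n - m + 1)) (k : Fin n) {w : ℕ} (hw : w < 2 ^ m) :
    QuadraticMap.polar Q (bits m w) (Pi.single k 1 ∘ window h i) =
      bitAt (K w <<< (i : ℕ)) k := by
  rw [single_comp_window, bitAt_shiftLeft]
  split_ifs with hk hik hik
  · exact (hK.bits_eq w hw _).symm
  · exact absurd hk.1 hik
  · rw [QuadraticMap.polar_zero_right, bitAt_eq_zero_of_lt (hK.lt w hw) (by omega)]
  · exact QuadraticMap.polar_zero_right ..

end StarForm

section StarKernel

variable {r n : ℕ} {K : ℕ → ℕ}

lemma bitAt_gradCode (N x j : ℕ) : bitAt (gradCode r K N x) j =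
    ∑ i ∈ Finset.range N, bitAt (K ((x >>> i) % 2 ^ (r + 1)) <<< i) j := by
  induction N generalizing x j with
  | zero => simp [gradCode, bitAt_zero_left]
  | succ N ih =>
    have later_window (i : ℕ) : bitAt (K ((x >>> (i + 1)) % 2 ^ (r + 1)) <<< (i + 1)) j =
        if 1 ≤ j then bitAt (K ((x >>> 1 >>> i) % 2 ^ (r + 1)) <<< i) (j - 1) else 0 := by
      rw [Nat.shiftLeft_add, bitAt_shiftLeft _ 1, Nat.add_comm, Nat.shiftRight_add]
    rw [gradCode, bitAt_xor, bitAt_shiftLeft, Finset.sum_range_succ', ih]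
    simp only [later_window]
    split_ifs <;> simp

lemma gradCode_lt (hK : IsXorLinear (r + 1) K) (N x : ℕ) : gradCode r K N x < 2 ^ (N + r) := by
  induction N generalizing x with
  | zero => exact Nat.two_pow_pos _
  | succ N ih =>
    have window_lt : K (x % 2 ^ (r + 1)) < 2 ^ (N + r + 1) :=
      (hK.lt _ (Nat.mod_lt _ (Nat.two_pow_pos _))).trans_le
        (Nat.pow_le_pow_right two_pos (by omega))
    rw [Nat.add_right_comm, gradCode, shiftLeft_one_xor_lt_iff window_lt]
    exact ih _

variable {Q : QuadraticForm (ZMod 2) (Fin (r + 1) → ZMod 2)}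

lemma polar_starForm_bits (hK : IsGradient Q K) (h : r + 1 ≤ n) (x : ℕ) (k : Fin n) :
    QuadraticMap.polar (starForm h Q) (bits n x) (Pi.single k 1) =
      bits n (gradCode r K (n - (r + 1) + 1) x) k := by
  simp only [polar_starForm, bits_comp_window,
    hK.polar_single_comp_window h _ k (Nat.mod_lt _ (Nat.two_pow_pos _))]
  rw [bits, bitAt_gradCode, ← Fin.sum_univ_eq_sum_range
    fun i => bitAt (K ((x >>> i) % 2 ^ (r + 1)) <<< i) k]

lemma bits_mem_ker_iff (hK : IsGradient Q K) (h : r + 1 ≤ n) (x : ℕ) :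
    bits n x ∈ LinearMap.ker (starForm h Q).polarBilin ↔
      gradCode r K (n - (r + 1) + 1) x = 0 := by
  have lt := gradCode_lt hK.isXorLinear (n - (r + 1) + 1) x
  rw [show n - (r + 1) + 1 + r = n by omega] at lt
  calc bits n x ∈ LinearMap.ker (starForm h Q).polarBilin
      ↔ ∀ k, QuadraticMap.polar (starForm h Q) (bits n x) (Pi.single k 1) = 0 := by
        refine ⟨fun hx k => LinearMap.congr_fun hx _, fun hx => ?_⟩
        exact (Pi.basisFun (ZMod 2) (Fin n)).ext fun k => by simpa using hx k
    _ ↔ bits n (gradCode r K (n - (r + 1) + 1) x) = bits n 0 := by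
        simp only [polar_starForm_bits hK, funext_iff]
        simp [bits, bitAt_zero_left]
    _ ↔ gradCode r K (n - (r + 1) + 1) x = 0 := (bits_injOn n).eq_iff lt (Nat.two_pow_pos n)

lemma mem_xorSpan_kernelBasis_iff (hK : IsGradient Q K) (h : r + 1 ≤ n) {z : ℕ} :
    z ∈ xorSpan (kernelBasis r K (n - (r + 1) + 1)) ↔ ∃ x < 2 ^ n,
      bits n x ∈ LinearMap.ker (starForm h Q).polarBilin ∧ x <<< (r + 1) = z := by
  rw [← Multiset.mem_coe, xorSpan_kernelBasis hK.isXorLinear,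
    show n - (r + 1) + 1 + r = n by omega]
  simp [bits_mem_ker_iff hK, and_assoc]

theorem card_ker_starForm (hK : IsGradient Q K) (h : r + 1 ≤ n) :
    Nat.card (LinearMap.ker (starForm h Q).polarBilin) =
      2 ^ (kernelBasis r K (n - (r + 1) + 1)).length := by
  have bijOn : Set.BijOn (bits n)
      ((Finset.range (2 ^ n)).filter fun x => gradCode r K (n - (r + 1) + 1) x = 0)
      (LinearMap.ker (starForm h Q).polarBilin) := by
    refine ⟨fun x hx => ?_, (bits_injOn n).mono fun x hx => ?_, fun v hv => ?_⟩
    · exact (bits_mem_ker_iff hK h x).2 (Finset.mem_filter.1 hx).2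
    · exact Finset.mem_range.1 (Finset.mem_filter.1 hx).1
    · obtain ⟨x, hx, rfl⟩ := bits_surjOn n (Set.mem_univ v)
      exact ⟨x, by simpa using ⟨hx, (bits_mem_ker_iff hK h x).1 hv⟩, rfl⟩
  have card_range := congrArg Multiset.card (xorSpan_kernelBasis hK.isXorLinear (n - (r + 1) + 1))
  rw [Multiset.coe_card, length_xorSpan, Multiset.card_map,
    show n - (r + 1) + 1 + r = n by omega] at card_range
  rw [card_range]
  exact (Nat.card_congr bijOn.equiv).symm.trans (Set.ncard_coe_finset _)

theorem semiBent_caStar_iff (hK : IsGradient Q K) (h : r + 1 ≤ n) :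
    semiBent (caStar (r + 1) n h Q) ↔
      (kernelBasis r K (n - (r + 1) + 1)).length = 2 - n % 2 := by
  rw [← coe_starForm, semiBent_iff_card_ker, card_ker_starForm hK,
    Nat.pow_right_inj one_lt_two]

/-- The value of the XOR of a local rule over `N` consecutive windows of `r + 1` cells, where the
digits of `T` are the truth table of the rule. -/
def starCode (r T : ℕ) : ℕ → ℕ → Bool
  | 0, _ => false
  | N + 1, x => T.testBit (x % 2 ^ (r + 1)) ^^ starCode r T N (x >>> 1)

lemma starCode_eq_sum (r T N x : ℕ) :
    ((starCode r T N x).toNat : ZMod 2) =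
      ∑ i ∈ Finset.range N, bitAt T ((x >>> i) % 2 ^ (r + 1)) := by
  induction N generalizing x with
  | zero => simp [starCode]
  | succ N ih =>
    simp only [starCode, natCast_toNat_xor, ih, Finset.sum_range_succ', ← Nat.shiftRight_add,
      Nat.add_comm 1, Nat.shiftRight_zero]
    exact add_comm _ _

lemma caStar_bits {f : (Fin (r + 1) → ZMod 2) → ZMod 2} {T : ℕ}
    (hT : ∀ w < 2 ^ (r + 1), f (bits (r + 1) w) = bitAt T w) (h : r + 1 ≤ n) (x : ℕ) :
    caStar (r + 1) n h f (bits n x) = (starCode r T (n - (r + 1) + 1) x).toNat := by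
  rw [starCode_eq_sum, ← Fin.sum_univ_eq_sum_range fun i => bitAt T ((x >>> i) % 2 ^ (r + 1))]
  refine Finset.sum_congr rfl fun i _ => ?_
  rw [← hT _ (Nat.mod_lt _ (Nat.two_pow_pos _)), ← bits_comp_window h]
  rfl

theorem balanced_caStar_iff (hK : IsGradient Q K) {T : ℕ}
    (hT : ∀ w < 2 ^ (r + 1), Q (bits (r + 1) w) = bitAt T w) (h : r + 1 ≤ n) :
    balanced (caStar (r + 1) n h Q) ↔ ∃ z ∈ xorSpan (kernelBasis r K (n - (r + 1) + 1)),
      starCode r T (n - (r + 1) + 1) (z >>> (r + 1)) := by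
  have : NeZero n := ⟨by omega⟩
  have star_ne_zero_iff (x : ℕ) : starForm h Q (bits n x) ≠ 0 ↔
      starCode r T (n - (r + 1) + 1) x = true := by
    rw [coe_starForm, caStar_bits hT]
    cases starCode r T (n - (r + 1) + 1) x <;> simp
  rw [← coe_starForm, balanced_iff_exists_mem_ker]
  constructor
  · rintro ⟨b, hb, hQb⟩
    obtain ⟨x, hx, rfl⟩ := bits_surjOn n (Set.mem_univ b)
    refine ⟨x <<< (r + 1), (mem_xorSpan_kernelBasis_iff hK h).2 ⟨x, hx, hb, rfl⟩, ?_⟩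
    rwa [Nat.shiftLeft_shiftRight, ← star_ne_zero_iff]
  · rintro ⟨z, hz, hstar⟩
    obtain ⟨x, -, hx, rfl⟩ := (mem_xorSpan_kernelBasis_iff hK h).1 hz
    rw [Nat.shiftLeft_shiftRight] at hstar
    exact ⟨bits n x, hx, (star_ne_zero_iff x).2 hstar⟩

end StarKernel

section Tables

variable {n : ℕ}

/-- The XOR of the list entries selected by the digits of `c`. -/
def xorSum : List ℕ → ℕ → ℕ
  | [], _ => 0
  | a :: L, c => (bif c.testBit 0 then a else 0) ^^^ xorSum L (c >>> 1)

lemma bitAt_xorSum_ofFn {k : ℕ} (a : Fin k → ℕ) (c j : ℕ) :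
    bitAt (xorSum (List.ofFn a) c) j = ∑ t, bits k c t * bitAt (a t) j := by
  induction k generalizing c with
  | zero => simp [xorSum, bitAt_zero_left]
  | succ k ih =>
    have bitAt_head : bitAt (bif c.testBit 0 then a 0 else 0) j = bitAt c 0 * bitAt (a 0) j := by
      cases hc : c.testBit 0 <;> simp [bitAt, hc]
    rw [List.ofFn_succ, xorSum, bitAt_xor, ih, bitAt_head, Fin.sum_univ_succ]
    simp [bits, bitAt_shiftRight, Nat.add_comm 1]

/-- The truth table of a Boolean function, packed into the digits of one number. -/
def truthTable (f : (Fin n → ZMod 2) → ZMod 2) : ℕ :=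
  Nat.ofBits fun w : Fin (2 ^ n) => decide (f (bits n w) = 1)

lemma bitAt_truthTable (f : (Fin n → ZMod 2) → ZMod 2) {w : ℕ} (hw : w < 2 ^ n) :
    bitAt (truthTable f) w = f (bits n w) := by
  rw [bitAt, truthTable, Nat.testBit_ofBits_lt _ _ hw, natCast_toNat_decide]

/-- The `i`-th block of `w` digits of `t`. -/
def lookup (w t i : ℕ) : ℕ := (t >>> (w * i)) % 2 ^ w

lemma bits_lookup (w t i : ℕ) (j : Fin w) : bits w (lookup w t i) j = bitAt t (w * i + j) := by
  rw [lookup, bits_mod_two_pow]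
  exact bitAt_shiftRight ..

/-- The gradients of `f` at all points, as consecutive blocks of `n` digits of one number. -/
def gradTable (f : (Fin n → ZMod 2) → ZMod 2) : ℕ :=
  Nat.ofBits fun k : Fin (2 ^ n * n) =>
    decide (QuadraticMap.polar f (bits n k.divNat) (Pi.single k.modNat 1) = 1)

lemma bitAt_gradTable (f : (Fin n → ZMod 2) → ZMod 2) {w : ℕ} (hw : w < 2 ^ n) (j : Fin n) :
    bitAt (gradTable f) (n * w + j) = QuadraticMap.polar f (bits n w) (Pi.single j 1) := by
  have index_eq : n * w + j = (finProdFinEquiv (⟨w, hw⟩, j)).val := by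
    simp [finProdFinEquiv, add_comm]
  have index_split : ((finProdFinEquiv (⟨w, hw⟩, j)).divNat, (finProdFinEquiv (⟨w, hw⟩, j)).modNat)
      = (⟨w, hw⟩, j) := finProdFinEquiv.symm_apply_apply _
  rw [Prod.mk.injEq] at index_split
  rw [bitAt, index_eq, gradTable, Nat.testBit_ofBits_lt _ _ (Fin.isLt _), Fin.eta, index_split.1,
    index_split.2, natCast_toNat_decide]

variable {k : ℕ}

/-- The truth table of `pairForm p (bits k c)`. -/
def pairFormTable (p : Fin k → Fin n × Fin n) (c : ℕ) : ℕ :=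
  xorSum (List.ofFn fun t => truthTable (pairMonomial (p t))) c

lemma pairForm_bits (p : Fin k → Fin n × Fin n) (c : ℕ) {w : ℕ} (hw : w < 2 ^ n) :
    pairForm p (bits k c) (bits n w) = bitAt (pairFormTable p c) w := by
  simp only [pairFormTable, bitAt_xorSum_ofFn, pairForm_apply, bitAt_truthTable _ hw]

/-- The gradient of `pairForm p (bits k c)` on bit codes. -/
def pairFormGrad (p : Fin k → Fin n × Fin n) (c : ℕ) : ℕ → ℕ :=
  lookup n (xorSum (List.ofFn fun t => gradTable (pairMonomial (p t))) c)

lemma isGradient_pairForm (p : Fin k → Fin n × Fin n) (c : ℕ) :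
    IsGradient (pairForm p (bits k c)) (pairFormGrad p c) where
  lt _ _ := Nat.mod_lt _ (Nat.two_pow_pos n)
  bits_eq w hw j := by
    simp only [pairFormGrad, bits_lookup, bitAt_xorSum_ofFn, bitAt_gradTable _ hw, polar_pairForm]

end Tables

section Rules

/-- The index pairs of the quadratic monomials in five variables. -/
def offDiagPairs : Fin 10 → Fin 5 × Fin 5 :=
  ![(0, 1), (0, 2), (0, 3), (0, 4), (1, 2), (1, 3), (1, 4), (2, 3), (2, 4), (3, 4)]

/-- The index pairs of the linear monomials in five variables. -/
def diagPairs : Fin 5 → Fin 5 × Fin 5 := fun i => (i, i)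

/-- The local rule whose quadratic and linear ANF coefficients are the digits of `q` and `l`. -/
def rule (q l : ℕ) : QuadraticForm (ZMod 2) (Fin 5 → ZMod 2) :=
  pairForm (Sum.elim offDiagPairs diagPairs) (Sum.elim (bits 10 q) (bits 5 l))

lemma rule_eq_add (q l : ℕ) :
    rule q l = pairForm offDiagPairs (bits 10 q) + pairForm diagPairs (bits 5 l) :=
  pairForm_sumElim ..

lemma isGradient_rule (q l : ℕ) : IsGradient (rule q l) (pairFormGrad offDiagPairs q) := by
  rw [rule_eq_add]
  refine (isGradient_pairForm offDiagPairs q).add_of_polar_eq_zero fun x y => ?_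
  simp only [polar_pairForm, diagPairs, polar_pairMonomial_diag, mul_zero, Finset.sum_const_zero]

/-- The truth table of `rule q l`. -/
def ruleTable (q l : ℕ) : ℕ := pairFormTable offDiagPairs q ^^^ pairFormTable diagPairs l

lemma rule_bits (q l : ℕ) {w : ℕ} (hw : w < 2 ^ 5) :
    rule q l (bits 5 w) = bitAt (ruleTable q l) w := by
  rw [ruleTable, bitAt_xor, ← pairForm_bits _ _ hw, ← pairForm_bits _ _ hw, rule_eq_add]
  rfl

lemma pairSupport_comp_sumElim_injective :
    Function.Injective (pairSupport ∘ Sum.elim offDiagPairs diagPairs) := by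
  decide

lemma exists_pairSupport_offDiagPairs_eq_iff (I : Finset (Fin 5)) :
    (∃ t, pairSupport (offDiagPairs t) = I) ↔ I.card = 2 := by
  revert I; decide

lemma exists_pairSupport_eq_iff (I : Finset (Fin 5)) :
    (∃ t, pairSupport (Sum.elim offDiagPairs diagPairs t) = I) ↔ I ≠ ∅ ∧ I.card ≤ 2 := by
  revert I; decide

lemma anf_rule_offDiag (q l : ℕ) (t : Fin 10) :
    anf (rule q l) (pairSupport (offDiagPairs t)) = bits 10 q t :=
  anf_pairForm_pairSupport pairSupport_comp_sumElim_injective _ (Sum.inl t)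

lemma anf_rule_diag (q l : ℕ) (t : Fin 5) :
    anf (rule q l) (pairSupport (diagPairs t)) = bits 5 l t :=
  anf_pairForm_pairSupport pairSupport_comp_sumElim_injective _ (Sum.inr t)

lemma anf_rule_eq_zero (q l : ℕ) {I : Finset (Fin 5)} (hI : ¬ (I ≠ ∅ ∧ I.card ≤ 2)) :
    anf (rule q l) I = 0 :=
  anf_pairForm_eq_zero _ (by simpa [← exists_pairSupport_eq_iff] using hI)

theorem algDegree_rule_eq_two_iff {q : ℕ} (hq : q < 2 ^ 10) (l : ℕ) :
    algDegree (rule q l) = 2 ↔ q ≠ 0 := by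
  have degree_le_two : algDegree (rule q l) ≤ 2 :=
    algDegree_le_iff.2 fun I hI => (of_not_not (mt (anf_rule_eq_zero q l) hI)).2
  have degree_le_one_iff : algDegree (rule q l) ≤ 1 ↔ bits 10 q = bits 10 0 := by
    simp only [funext_iff, ← anf_rule_offDiag q l, algDegree_le_iff]
    simp only [bits, bitAt_zero_left]
    refine ⟨fun h t => ?_, fun h I hI => ?_⟩
    · by_contra ht
      have := (exists_pairSupport_offDiagPairs_eq_iff _).1 ⟨t, rfl⟩
      exact absurd (h _ ht) (by omega)
    · by_contra hcard
      have card_eq : I.card = 2 := by have := algDegree_le_iff.1 degree_le_two I hI; omega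
      obtain ⟨t, rfl⟩ := (exists_pairSupport_offDiagPairs_eq_iff I).2 card_eq
      exact hI (h t)
  rw [ne_eq, ← (bits_injOn 10).eq_iff hq (Nat.two_pow_pos 10), ← degree_le_one_iff]
  omega

theorem exists_eq_rule {f : (Fin 5 → ZMod 2) → ZMod 2} (hdeg : algDegree f ≤ 2)
    (hconst : anf f ∅ = 0) : ∃ q < 2 ^ 10, ∃ l < 2 ^ 5, f = rule q l := by
  have anf_eq_zero (I : Finset (Fin 5))
      (hI : ∀ t, pairSupport (Sum.elim offDiagPairs diagPairs t) ≠ I) : anf f I = 0 := by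
    by_contra h
    refine not_exists.2 hI ((exists_pairSupport_eq_iff I).2 ⟨?_, algDegree_le_iff.1 hdeg I h⟩)
    rintro rfl
    exact h hconst
  obtain ⟨q, hq, q_eq⟩ :=
    bits_surjOn 10 (Set.mem_univ fun t => anf f (pairSupport (offDiagPairs t)))
  obtain ⟨l, hl, l_eq⟩ :=
    bits_surjOn 5 (Set.mem_univ fun t => anf f (pairSupport (diagPairs t)))
  refine ⟨q, hq, l, hl,
    (eq_pairForm_of_anf_eq_zero pairSupport_comp_sumElim_injective anf_eq_zero).trans ?_⟩
  rw [rule, q_eq, l_eq]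
  congr 2
  ext (t | t) <;> rfl

lemma rule_injective {q q' l l' : ℕ} (hq : q < 2 ^ 10) (hq' : q' < 2 ^ 10) (hl : l < 2 ^ 5)
    (hl' : l' < 2 ^ 5) (h : ⇑(rule q l) = rule q' l') : q = q' ∧ l = l' := by
  refine ⟨bits_injOn 10 hq hq' (funext fun t => ?_), bits_injOn 5 hl hl' (funext fun t => ?_)⟩
  · rw [← anf_rule_offDiag q l, h, anf_rule_offDiag]
  · rw [← anf_rule_diag q l, h, anf_rule_diag]

theorem card_degree_two_eq_sum {P : ((Fin 5 → ZMod 2) → ZMod 2) → Prop} {S : ℕ → Prop}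
    {B : ℕ → ℕ → Prop} [DecidablePred S] [∀ q, DecidablePred (B q)]
    (hP : ∀ q l, P (rule q l) ↔ S q ∧ B q l) :
    Nat.card {f // algDegree f = 2 ∧ anf f ∅ = 0 ∧ P f} =
      ∑ q ∈ Finset.Ico 1 (2 ^ 10) with S q, ((Finset.range (2 ^ 5)).filter (B q)).card := by
  have bijOn : Set.BijOn (fun c : (_ : ℕ) × ℕ => ⇑(rule c.1 c.2))
      (((Finset.Ico 1 (2 ^ 10)).filter S).sigma fun q => (Finset.range (2 ^ 5)).filter (B q))
      {f | algDegree f = 2 ∧ anf f ∅ = 0 ∧ P f} := by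
    refine ⟨?_, ?_, ?_⟩
    · rintro ⟨q, l⟩ hc
      simp only [Finset.mem_coe, Finset.mem_sigma, Finset.mem_filter, Finset.mem_Ico] at hc
      obtain ⟨⟨⟨q_pos, hq⟩, hS⟩, -, hB⟩ := hc
      exact ⟨(algDegree_rule_eq_two_iff hq l).2 (by omega), anf_rule_eq_zero q l (by simp),
        (hP q l).2 ⟨hS, hB⟩⟩
    · rintro ⟨q, l⟩ hc ⟨q', l'⟩ hc' rule_eq
      simp only [Finset.mem_coe, Finset.mem_sigma, Finset.mem_filter, Finset.mem_Ico,
        Finset.mem_range] at hc hc'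
      obtain ⟨rfl, rfl⟩ := rule_injective hc.1.1.2 hc'.1.1.2 hc.2.1 hc'.2.1 rule_eq
      rfl
    · rintro f ⟨hdeg, hconst, hPf⟩
      obtain ⟨q, hq, l, hl, rfl⟩ := exists_eq_rule hdeg.le hconst
      have q_ne_zero := (algDegree_rule_eq_two_iff hq l).1 hdeg
      obtain ⟨hS, hB⟩ := (hP q l).1 hPf
      refine ⟨⟨q, l⟩, ?_, rfl⟩
      simp only [Finset.mem_coe, Finset.mem_sigma, Finset.mem_filter, Finset.mem_Ico,
        Finset.mem_range]
      exact ⟨⟨⟨by omega, hq⟩, hS⟩, hl, hB⟩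
  rw [← Finset.card_sigma]
  exact (Nat.card_congr bijOn.equiv).symm.trans (Set.ncard_coe_finset _)

end Rules

section Counting

/-- For `5 ≤ n ≤ 20`, the radicals of the functions constructed from the local rules with
quadratic part `q` have the dimension required for semi-bentness; here `n = N + 5`. -/
abbrev HasSemiBentStars (q : ℕ) : Prop :=
  ∀ N < 16, (kernelBasis 4 (pairFormGrad offDiagPairs q) (N + 1)).length = 2 - (N + 5) % 2

/-- For `5 ≤ n ≤ 20`, the function constructed from `rule q l` does not vanish on its radical;
here `n = N + 5`. -/
abbrev HasBalancedStars (q l : ℕ) : Prop :=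
  ∀ N < 16, ∃ z ∈ xorSpan (kernelBasis 4 (pairFormGrad offDiagPairs q) (N + 1)),
    starCode 4 (ruleTable q l) (N + 1) (z >>> (4 + 1))

lemma forall_le_twenty_iff {P : ∀ n, 5 ≤ n → Prop} :
    (∀ n (h : 5 ≤ n), n ≤ 20 → P n h) ↔ ∀ N < 16, P (N + 5) (Nat.le_add_left 5 N) := by
  refine ⟨fun hP N hN => hP _ _ (by omega), fun hP n h hn => ?_⟩
  obtain ⟨N, rfl⟩ := Nat.exists_eq_add_of_le' h
  exact hP N (by omega)

lemma forall_semiBent_caStar_rule_iff (q l : ℕ) :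
    (∀ n (h : 5 ≤ n), n ≤ 20 → semiBent (caStar 5 n h (rule q l))) ↔ HasSemiBentStars q := by
  simp only [forall_le_twenty_iff, semiBent_caStar_iff (isGradient_rule q l), HasSemiBentStars]
  simp only [Nat.reduceAdd, Nat.add_sub_cancel]

lemma forall_balanced_caStar_rule_iff (q l : ℕ) :
    (∀ n (h : 5 ≤ n), n ≤ 20 → balanced (caStar 5 n h (rule q l))) ↔ HasBalancedStars q l := by
  simp only [forall_le_twenty_iff, HasBalancedStars,
    balanced_caStar_iff (isGradient_rule q l) fun _ hw => rule_bits q l hw]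
  simp only [Nat.reduceAdd, Nat.add_sub_cancel]

lemma semiBent_and_forall_caStar_iff {f : (Fin 5 → ZMod 2) → ZMod 2} :
    (semiBent f ∧ ∀ n (h : 5 ≤ n), n ≤ 20 → semiBent (caStar 5 n h f)) ↔
      ∀ n (h : 5 ≤ n), n ≤ 20 → semiBent (caStar 5 n h f) :=
  and_iff_right_of_imp fun h => caStar_self f ▸ h 5 le_rfl (by norm_num)

-- One statement, so that evaluating the second count reuses the kernel bases of the first.
theorem card_hasSemiBentStars_and_sum_card_hasBalancedStars :
    ((Finset.Ico 1 (2 ^ 10)).filter HasSemiBentStars).card = 69 ∧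
    ∑ q ∈ Finset.Ico 1 (2 ^ 10) with HasSemiBentStars q,
      ((Finset.range (2 ^ 5)).filter (HasBalancedStars q)).card = 280 := by
  decide +kernel

end Counting

/-- there are exactly 2208 quadratic 5-variable functions (zero constant
term) that are semi-bent and yield semi-bent `f*` for all `5 ≤ n ≤ 20`; exactly 280
of them moreover yield balanced `f*` for all `5 ≤ n ≤ 20`. -/
theorem quadratic5_semibent_count :
    Nat.card {f : (Fin 5 → ZMod 2) → ZMod 2 //
      algDegree f = 2 ∧ anf f ∅ = 0 ∧ semiBent f ∧
      ∀ n (h : 5 ≤ n), n ≤ 20 → semiBent (caStar 5 n h f)} = 2208 ∧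
    Nat.card {f : (Fin 5 → ZMod 2) → ZMod 2 //
      algDegree f = 2 ∧ anf f ∅ = 0 ∧ semiBent f ∧
      (∀ n (h : 5 ≤ n), n ≤ 20 → semiBent (caStar 5 n h f)) ∧
      (∀ n (h : 5 ≤ n), n ≤ 20 → balanced (caStar 5 n h f))} = 280 := by
  obtain ⟨card_semiBent, sum_balanced⟩ := card_hasSemiBentStars_and_sum_card_hasBalancedStars
  constructor
  · rw [card_degree_two_eq_sum (S := HasSemiBentStars) (B := fun _ _ => True) fun q l => by
      rw [semiBent_and_forall_caStar_iff, forall_semiBent_caStar_rule_iff, and_true]]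
    simp only [Finset.filter_true, Finset.sum_const, Finset.card_range, card_semiBent]
    rfl
  · rw [card_degree_two_eq_sum (S := HasSemiBentStars) (B := HasBalancedStars) fun q l => by
      rw [← and_assoc, semiBent_and_forall_caStar_iff, forall_semiBent_caStar_rule_iff,
        forall_balanced_caStar_rule_iff]]
    exact sum_balanced
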